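/- Lemma B.6 (existence and uniqueness of the extension of a morphism to a morphism of triangles): Let D be a triangulated category equipped with a slicing P. Let E and F be nonzero objects of D, let ψ be a real number, and let E' → E → E'' → E'⟦1⟧ and F' → F → F'' → F'⟦1⟧ be distinguished triangles. Suppose E', E'', F', F'' admit HN filtrations whose sets of phases satisfy φ⁻(E') > ψ ≥ φ⁺(E'') and φ⁻(F') > ψ ≥ φ⁺(F''), where φ⁻ denotes the lowest and φ⁺ the highest phase occurring in the respective filtration. Then every morphism f : E → F extends uniquely to a morphism of triangles (f', f, f''): there exist unique f' : E' → F' and f'' : E'' → F'' making the three squares of the two triangles commute. Moreover, if f is an isomorphism, then f' and f'' are isomorphisms as well. -/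

import Mathlib

open CategoryTheory Category Limits Pretriangulated

universe v u

variable {D : Type u} [Category.{v} D] [Preadditive D] [HasZeroObject D]
  [HasShift D ℤ] [∀ n : ℤ, (shiftFunctor D n).Additive] [Pretriangulated D]

/-- A Harder–Narasimhan filtration of an object `E` with respect to a family
of classes of objects `P : ℝ → Set D`:  an integer `n ≥ 1`, objects
`0 = filtObj 0, filtObj 1, …, filtObj n = E`, nonzero semistable factors
`factor j ∈ P (phase j)` for `1 ≤ j ≤ n`, strictly decreasing phases
`phase 1 > phase 2 > … > phase n`, and distinguished triangles
`filtObj (j-1) ⟶ filtObj j ⟶ factor j ⟶ (filtObj (j-1))⟦1⟧`. -/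
structure HNFiltration (P : ℝ → Set D) (E : D) where
  n : ℕ
  one_le_n : 1 ≤ n
  filtObj : ℕ → D
  factor : ℕ → D
  phase : ℕ → ℝ
  isZero_filtObj_zero : IsZero (filtObj 0)
  filtObj_n : filtObj n = E
  phase_strictAnti : ∀ j, 1 ≤ j → j < n → phase (j + 1) < phase j
  factor_nonzero : ∀ j, 1 ≤ j → j ≤ n → ¬ IsZero (factor j)
  factor_mem : ∀ j, 1 ≤ j → j ≤ n → factor j ∈ P (phase j)
  triangle : ∀ j, 1 ≤ j → j ≤ n →
    ∃ (f : filtObj (j - 1) ⟶ filtObj j) (g : filtObj j ⟶ factor j)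
      (h : factor j ⟶ (filtObj (j - 1))⟦(1 : ℤ)⟧),
        Triangle.mk f g h ∈ distTriang D

/-- A slicing on a (pre)triangulated category `D`:  for each real number `φ`
a class `P φ` of objects (the semistable objects of phase `φ`), closed under
isomorphism, containing the zero objects and closed under finite direct sums,
such that (A2) `P (φ + 1) = P φ ⟦1⟧`, (A3) there are no nonzero morphisms from
semistables of bigger phase to semistables of smaller phase, and (A4) every
nonzero object admits a Harder–Narasimhan filtration. -/
structure Slicing (D : Type u) [Category.{v} D] [Preadditive D] [HasZeroObject D]
    [HasShift D ℤ] [∀ n : ℤ, (shiftFunctor D n).Additive] [Pretriangulated D] where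
  P : ℝ → Set D
  mem_of_iso : ∀ (φ : ℝ) (X Y : D), (X ≅ Y) → X ∈ P φ → Y ∈ P φ
  zero_mem : ∀ (φ : ℝ) (X : D), IsZero X → X ∈ P φ
  sum_mem : ∀ (φ : ℝ) (X Y : D) (b : BinaryBicone X Y), b.IsBilimit →
    X ∈ P φ → Y ∈ P φ → b.pt ∈ P φ
  shift_mem : ∀ (φ : ℝ) (X : D), X ∈ P (φ + 1) ↔ ∃ Y ∈ P φ, Nonempty (X ≅ Y⟦(1 : ℤ)⟧)
  hom_zero : ∀ (φ₁ φ₂ : ℝ), φ₂ < φ₁ → ∀ (A₁ A₂ : D), A₁ ∈ P φ₁ → A₂ ∈ P φ₂ →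
    ∀ f : A₁ ⟶ A₂, f = 0
  hn_exists : ∀ E : D, ¬ IsZero E → Nonempty (HNFiltration P E)

/-!
If `Hom(E', F'')` and `Hom(E'⟦1⟧, F'')` vanish, the composite `E' ⟶ E ⟶ F ⟶ F''` is zero, so
`E' ⟶ E ⟶ F` lifts to `F'` and the lift is completed to a morphism of triangles; two such
morphisms differ on the outer terms by maps factoring through `E'⟦1⟧ ⟶ F''`, which are zero.
The vanishing is a dévissage along the two Harder–Narasimhan filtrations: every phase of `E'`,
and a fortiori of `E'⟦1⟧`, exceeds every phase of `F''`. When `f` is invertible, extending `f⁻¹`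
as well gives a two-sided inverse, again by uniqueness.
-/

section TriangleMorphisms

variable {T₁ T₂ : Triangle D}

theorem exists_triangle_hom_hom₂_eq (hT₁ : T₁ ∈ distTriang D) (hT₂ : T₂ ∈ distTriang D)
    (h₀ : ∀ g : T₁.obj₁ ⟶ T₂.obj₃, g = 0) (f : T₁.obj₂ ⟶ T₂.obj₂) :
    ∃ φ : T₁ ⟶ T₂, φ.hom₂ = f := by
  obtain ⟨f', comm₁⟩ := T₂.coyoneda_exact₂ hT₂ (T₁.mor₁ ≫ f) (h₀ _)
  obtain ⟨f'', comm₂, comm₃⟩ :=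
    complete_distinguished_triangle_morphism _ _ hT₁ hT₂ f' f comm₁
  exact ⟨{ hom₁ := f', hom₂ := f, hom₃ := f'' }, rfl⟩

theorem triangle_hom_ext_of_hom₂_eq (hT₁ : T₁ ∈ distTriang D) (hT₂ : T₂ ∈ distTriang D)
    (h₁ : ∀ g : T₁.obj₁⟦(1 : ℤ)⟧ ⟶ T₂.obj₃, g = 0) {φ φ' : T₁ ⟶ T₂}
    (h : φ.hom₂ = φ'.hom₂) : φ = φ' := by
  suffices vanish : ∀ δ : T₁ ⟶ T₂, δ.hom₂ = 0 → δ.hom₁ = 0 ∧ δ.hom₃ = 0 by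
    obtain ⟨hom₁_eq, hom₃_eq⟩ := vanish (φ - φ') (sub_eq_zero.2 h)
    ext
    exacts [sub_eq_zero.1 hom₁_eq, h, sub_eq_zero.1 hom₃_eq]
  refine fun δ hδ ↦ ⟨?_, ?_⟩
  · have shift_comp : δ.hom₁⟦(1 : ℤ)⟧' ≫ T₂.mor₁⟦(1 : ℤ)⟧' = 0 := by
      rw [← Functor.map_comp, ← δ.comm₁, hδ, comp_zero, Functor.map_zero]
    obtain ⟨g, hg⟩ := T₂.coyoneda_exact₁ hT₂ _ shift_comp
    rw [h₁ g, zero_comp] at hg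
    exact (Functor.map_eq_zero_iff (shiftFunctor D (1 : ℤ))).1 hg
  · obtain ⟨g, hg⟩ := T₁.yoneda_exact₃ hT₁ δ.hom₃ (by rw [δ.comm₂, hδ, zero_comp])
    rw [hg, h₁ g, comp_zero]

theorem existsUnique_triangle_hom_hom₂_eq (hT₁ : T₁ ∈ distTriang D) (hT₂ : T₂ ∈ distTriang D)
    (h₀ : ∀ g : T₁.obj₁ ⟶ T₂.obj₃, g = 0) (h₁ : ∀ g : T₁.obj₁⟦(1 : ℤ)⟧ ⟶ T₂.obj₃, g = 0)
    (f : T₁.obj₂ ⟶ T₂.obj₂) : ∃! φ : T₁ ⟶ T₂, φ.hom₂ = f :=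
  existsUnique_of_exists_of_unique (exists_triangle_hom_hom₂_eq hT₁ hT₂ h₀ f)
    fun _ _ hφ hφ' ↦ triangle_hom_ext_of_hom₂_eq hT₁ hT₂ h₁ (hφ.trans hφ'.symm)

theorem isIso_triangle_hom_of_isIso_hom₂ (hT₁ : T₁ ∈ distTriang D) (hT₂ : T₂ ∈ distTriang D)
    (h₂₁ : ∀ g : T₂.obj₁ ⟶ T₁.obj₃, g = 0)
    (h₁₁ : ∀ g : T₁.obj₁⟦(1 : ℤ)⟧ ⟶ T₁.obj₃, g = 0)
    (h₂₂ : ∀ g : T₂.obj₁⟦(1 : ℤ)⟧ ⟶ T₂.obj₃, g = 0)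
    (φ : T₁ ⟶ T₂) [IsIso φ.hom₂] : IsIso φ := by
  obtain ⟨χ, hχ⟩ := exists_triangle_hom_hom₂_eq hT₂ hT₁ h₂₁ (inv φ.hom₂)
  refine ⟨χ, triangle_hom_ext_of_hom₂_eq hT₁ hT₁ h₁₁ ?_,
    triangle_hom_ext_of_hom₂_eq hT₂ hT₂ h₂₂ ?_⟩
  · simp [hχ]
  · simp [hχ]

end TriangleMorphisms

namespace HNFiltration

variable {P : ℝ → Set D} {X : D}

theorem phase_le_phase (G : HNFiltration P X) {i j : ℕ} (hi : 1 ≤ i) (hij : i ≤ j)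
    (hj : j ≤ G.n) : G.phase j ≤ G.phase i := by
  induction j, hij using Nat.le_induction with
  | base => exact le_rfl
  | succ k hik ih =>
    exact (G.phase_strictAnti k (hi.trans hik) hj).le.trans (ih (Nat.le_of_succ_le hj))

theorem prop_of_prop_factor (G : HNFiltration P X) (Q : ObjectProperty D) [Q.ContainsZero]
    [Q.IsClosedUnderIsomorphisms] [Q.IsTriangulatedClosed₂]
    (hQ : ∀ j, 1 ≤ j → j ≤ G.n → Q (G.factor j)) : Q X := by
  suffices prop_filtObj : ∀ j ≤ G.n, Q (G.filtObj j) from G.filtObj_n ▸ prop_filtObj G.n le_rfl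
  intro j
  induction j with
  | zero => exact fun _ ↦ Q.prop_of_isZero G.isZero_filtObj_zero
  | succ k ih =>
    intro hk
    obtain ⟨_, _, _, hT⟩ := G.triangle (k + 1) k.succ_pos hk
    exact Q.ext_of_isTriangulatedClosed₂ _ hT (ih (Nat.le_of_succ_le hk))
      (hQ (k + 1) k.succ_pos hk)

end HNFiltration

namespace Slicing

variable (S : Slicing D) {X Y : D}

theorem shift_mem_add_one {φ : ℝ} (hX : X ∈ S.P φ) : X⟦(1 : ℤ)⟧ ∈ S.P (φ + 1) :=
  (S.shift_mem φ _).2 ⟨X, hX, ⟨Iso.refl _⟩⟩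

/-- The filtration of `X⟦1⟧` obtained by shifting every term and every factor of a
Harder–Narasimhan filtration of `X`, which raises all phases by `1`. -/
def shiftHNFiltration (G : HNFiltration S.P X) : HNFiltration S.P (X⟦(1 : ℤ)⟧) where
  n := G.n
  one_le_n := G.one_le_n
  filtObj j := (G.filtObj j)⟦(1 : ℤ)⟧
  factor j := (G.factor j)⟦(1 : ℤ)⟧
  phase j := G.phase j + 1
  isZero_filtObj_zero := (shiftFunctor D (1 : ℤ)).map_isZero G.isZero_filtObj_zero
  filtObj_n := congrArg (fun Z ↦ Z⟦(1 : ℤ)⟧) G.filtObj_n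
  phase_strictAnti j hj hn := by gcongr; exact G.phase_strictAnti j hj hn
  factor_nonzero j hj hn h :=
    G.factor_nonzero j hj hn (h.of_full_of_faithful_of_isZero (shiftFunctor D (1 : ℤ)) _)
  factor_mem j hj hn := S.shift_mem_add_one (G.factor_mem j hj hn)
  triangle j hj hn := by
    obtain ⟨_, _, _, hT⟩ := G.triangle j hj hn
    exact ⟨_, _, _, Triangle.shift_distinguished _ hT 1⟩

theorem hom_eq_zero_of_mem_of_phase_one_lt {A : D} {φ : ℝ} (hA : A ∈ S.P φ)
    (G : HNFiltration S.P Y) (h : G.phase 1 < φ) (f : A ⟶ Y) : f = 0 := by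
  refine G.prop_of_prop_factor (ObjectProperty.singleton A).rightOrthogonal ?_ f (by simp)
  rintro j hj hn _ g ⟨⟩
  have phase_lt : G.phase j < φ := (G.phase_le_phase le_rfl hj hn).trans_lt h
  exact S.hom_zero φ _ phase_lt _ _ hA (G.factor_mem j hj hn) g

theorem hom_eq_zero_of_phase_one_lt_phase_n (GX : HNFiltration S.P X)
    (GY : HNFiltration S.P Y) (h : GY.phase 1 < GX.phase GX.n) (f : X ⟶ Y) : f = 0 := by
  refine GX.prop_of_prop_factor (ObjectProperty.singleton Y).leftOrthogonal ?_ f (by simp)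
  rintro j hj hn _ g ⟨⟩
  have lt_phase : GY.phase 1 < GX.phase j := h.trans_le (GX.phase_le_phase hj hn le_rfl)
  exact S.hom_eq_zero_of_mem_of_phase_one_lt (GX.factor_mem j hj hn) GY lt_phase g

theorem hom_shift_eq_zero_of_phase_one_lt_phase_n_add_one (GX : HNFiltration S.P X)
    (GY : HNFiltration S.P Y) (h : GY.phase 1 < GX.phase GX.n + 1) (f : X⟦(1 : ℤ)⟧ ⟶ Y) :
    f = 0 :=
  S.hom_eq_zero_of_phase_one_lt_phase_n (S.shiftHNFiltration GX) GY h f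

end Slicing

theorem triangle_morphism_extension_unique_general (S : Slicing D)
    {E' E E'' F' F F'' : D} (ψ : ℝ)
    (uE : E' ⟶ E) (vE : E ⟶ E'') (wE : E'' ⟶ E'⟦(1 : ℤ)⟧)
    (uF : F' ⟶ F) (vF : F ⟶ F'') (wF : F'' ⟶ F'⟦(1 : ℤ)⟧)
    (hTE : Triangle.mk uE vE wE ∈ distTriang D)
    (hTF : Triangle.mk uF vF wF ∈ distTriang D)
    (GE' : HNFiltration S.P E') (GE'' : HNFiltration S.P E'')
    (GF' : HNFiltration S.P F') (GF'' : HNFiltration S.P F'')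
    (hE₁ : GE'.phase GE'.n > ψ) (hE₂ : ψ ≥ GE''.phase 1)
    (hF₁ : GF'.phase GF'.n > ψ) (hF₂ : ψ ≥ GF''.phase 1) :
    ∀ f : E ⟶ F,
      (∃! p : (E' ⟶ F') × (E'' ⟶ F''),
        uE ≫ f = p.1 ≫ uF ∧ vE ≫ p.2 = f ≫ vF ∧
          wE ≫ p.1⟦(1 : ℤ)⟧' = p.2 ≫ wF) ∧
      (IsIso f → ∀ (f' : E' ⟶ F') (f'' : E'' ⟶ F''),
        (uE ≫ f = f' ≫ uF ∧ vE ≫ f'' = f ≫ vF ∧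
          wE ≫ f'⟦(1 : ℤ)⟧' = f'' ≫ wF) →
        IsIso f' ∧ IsIso f'') := by
  have hom_zero {X Y : D} (GX : HNFiltration S.P X) (GY : HNFiltration S.P Y)
      (hX : GX.phase GX.n > ψ) (hY : ψ ≥ GY.phase 1) : ∀ g : X ⟶ Y, g = 0 :=
    S.hom_eq_zero_of_phase_one_lt_phase_n GX GY (hY.trans_lt hX)
  have hom_shift_zero {X Y : D} (GX : HNFiltration S.P X) (GY : HNFiltration S.P Y)
      (hX : GX.phase GX.n > ψ) (hY : ψ ≥ GY.phase 1) : ∀ g : X⟦(1 : ℤ)⟧ ⟶ Y, g = 0 :=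
    S.hom_shift_eq_zero_of_phase_one_lt_phase_n_add_one GX GY (by linarith)
  refine fun f ↦ ⟨?_, fun hf f' f'' ⟨comm₁, comm₂, comm₃⟩ ↦ ?_⟩
  · obtain ⟨φ, rfl, φ_unique⟩ := existsUnique_triangle_hom_hom₂_eq hTE hTF
      (hom_zero GE' GF'' hE₁ hF₂) (hom_shift_zero GE' GF'' hE₁ hF₂) f
    refine ⟨(φ.hom₁, φ.hom₃), ⟨φ.comm₁, φ.comm₂, φ.comm₃⟩, ?_⟩
    rintro ⟨f', f''⟩ ⟨comm₁, comm₂, comm₃⟩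
    have eq_φ := φ_unique ⟨f', _, f'', comm₁, comm₂, comm₃⟩ rfl
    exact Prod.ext (congrArg (·.hom₁) eq_φ) (congrArg (·.hom₃) eq_φ)
  · let φ : Triangle.mk uE vE wE ⟶ Triangle.mk uF vF wF := ⟨f', f, f'', comm₁, comm₂, comm₃⟩
    have : IsIso φ.hom₂ := hf
    have : IsIso φ := isIso_triangle_hom_of_isIso_hom₂ hTE hTF (hom_zero GF' GE'' hF₁ hE₂)
      (hom_shift_zero GE' GE'' hE₁ hE₂) (hom_shift_zero GF' GF'' hF₁ hF₂) φ
    exact ⟨inferInstanceAs (IsIso (Triangle.π₁.map φ)),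
      inferInstanceAs (IsIso (Triangle.π₃.map φ))⟩

/-- Lemma B.6: given nonzero objects `E`, `F`, a real number `ψ`, distinguished
triangles `E' ⟶ E ⟶ E'' ⟶ E'⟦1⟧` and `F' ⟶ F ⟶ F'' ⟶ F'⟦1⟧` whose outer terms
admit HN filtrations with `φ⁻(E') > ψ ≥ φ⁺(E'')` and `φ⁻(F') > ψ ≥ φ⁺(F'')`,
every morphism `f : E ⟶ F` extends uniquely to a morphism of triangles
`(f', f, f'')`;  moreover, if `f` is an isomorphism then so are `f'` and `f''`. -/
theorem triangle_morphism_extension_unique [IsTriangulated D] (S : Slicing D)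
    {E' E E'' F' F F'' : D}
    (hE : ¬ IsZero E) (hF : ¬ IsZero F) (ψ : ℝ)
    (uE : E' ⟶ E) (vE : E ⟶ E'') (wE : E'' ⟶ E'⟦(1 : ℤ)⟧)
    (uF : F' ⟶ F) (vF : F ⟶ F'') (wF : F'' ⟶ F'⟦(1 : ℤ)⟧)
    (hTE : Triangle.mk uE vE wE ∈ distTriang D)
    (hTF : Triangle.mk uF vF wF ∈ distTriang D)
    (GE' : HNFiltration S.P E') (GE'' : HNFiltration S.P E'')
    (GF' : HNFiltration S.P F') (GF'' : HNFiltration S.P F'')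
    (hE₁ : GE'.phase GE'.n > ψ) (hE₂ : ψ ≥ GE''.phase 1)
    (hF₁ : GF'.phase GF'.n > ψ) (hF₂ : ψ ≥ GF''.phase 1) :
    ∀ f : E ⟶ F,
      (∃! p : (E' ⟶ F') × (E'' ⟶ F''),
        uE ≫ f = p.1 ≫ uF ∧ vE ≫ p.2 = f ≫ vF ∧
          wE ≫ p.1⟦(1 : ℤ)⟧' = p.2 ≫ wF) ∧
      (IsIso f → ∀ (f' : E' ⟶ F') (f'' : E'' ⟶ F''),
        (uE ≫ f = f' ≫ uF ∧ vE ≫ f'' = f ≫ vF ∧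
          wE ≫ f'⟦(1 : ℤ)⟧' = f'' ≫ wF) →
        IsIso f' ∧ IsIso f'') := by
  exact triangle_morphism_extension_unique_general S ψ uE vE wE uF vF wF hTE hTF
    GE' GE'' GF' GF'' hE₁ hE₂ hF₁ hF₂
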